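/- For every n ≥ 1, the map bht2dep from binary head trees with n leaves to dependency trees on n words is surjective onto the set of projective dependency trees on n words; consequently there exists an injective function Φ from the set of projective dependency trees on n words to the set of BHTs with n leaves such that bht2dep(Φ(t)) = t for every projective dependency tree t (Theorem 1 of the paper: every projective dependency tree corresponds to a BHT, bijectively onto the image of Φ). -/

import Mathlib

/-- Binary head trees (BHTs). -/
inductive BHT : Type where
  | leaf : BHT
  | nodeL (l r : BHT) : BHT
  | nodeR (l r : BHT) : BHT

/-- Number of leaves of a BHT. -/
def BHT.numLeaves : BHT → ℕ
  | .leaf => 1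
  | .nodeL l r => l.numLeaves + r.numLeaves
  | .nodeR l r => l.numLeaves + r.numLeaves

/-- Head position of a BHT whose span of leaf positions starts at `i`. -/
def BHT.headAt : BHT → ℕ → ℕ
  | .leaf, i => i
  | .nodeL l _, i => l.headAt i
  | .nodeR l r, i => r.headAt (i + l.numLeaves)

/-- Head position of a BHT placed over positions `0, …, numLeaves - 1`. -/
def BHT.head (T : BHT) : ℕ := T.headAt 0

/-- Arc set of a BHT whose span of leaf positions starts at `i`. -/
def BHT.arcsAt : BHT → ℕ → Set (ℕ × ℕ)
  | .leaf, _ => ∅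
  | .nodeL l r, i =>
      insert (l.headAt i, r.headAt (i + l.numLeaves)) (l.arcsAt i ∪ r.arcsAt (i + l.numLeaves))
  | .nodeR l r, i =>
      insert (r.headAt (i + l.numLeaves), l.headAt i) (l.arcsAt i ∪ r.arcsAt (i + l.numLeaves))

/-- Arc set of a BHT placed over positions `0, …, numLeaves - 1`. -/
def BHT.arcs (T : BHT) : Set (ℕ × ℕ) := T.arcsAt 0

/-- `S` is a subtree of `T` (placed over positions `0, …, numLeaves - 1`) whose
leaf span starts at absolute position `i`. -/
inductive BHT.SubtreeAt : BHT → ℕ → BHT → Prop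
  | refl (T : BHT) : BHT.SubtreeAt T 0 T
  | inlL (l r S : BHT) (i : ℕ) : BHT.SubtreeAt l i S → BHT.SubtreeAt (BHT.nodeL l r) i S
  | inrL (l r S : BHT) (i : ℕ) :
      BHT.SubtreeAt r i S → BHT.SubtreeAt (BHT.nodeL l r) (l.numLeaves + i) S
  | inlR (l r S : BHT) (i : ℕ) : BHT.SubtreeAt l i S → BHT.SubtreeAt (BHT.nodeR l r) i S
  | inrR (l r S : BHT) (i : ℕ) :
      BHT.SubtreeAt r i S → BHT.SubtreeAt (BHT.nodeR l r) (l.numLeaves + i) S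

/-- `bht2dep T j = some i` if `i` is the unique position with `(i, j) ∈ arcs T`,
and `none` if `j` has no incoming arc. -/
noncomputable def bht2dep (n : ℕ) (T : BHT) : Fin n → Option (Fin n) := fun j =>
  letI := Classical.dec (∃! i : Fin n, ((i : ℕ), (j : ℕ)) ∈ T.arcs)
  if h : ∃! i : Fin n, ((i : ℕ), (j : ℕ)) ∈ T.arcs then some h.choose else none

/-- `head` is a dependency tree on `n` words: exactly one root (position with
`head r = none`), and every position reaches the root by iterating `head`. -/
def IsDepTree {n : ℕ} (head : Fin n → Option (Fin n)) : Prop :=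
  ∃ r : Fin n, head r = none ∧ (∀ r' : Fin n, head r' = none → r' = r) ∧
    ∀ j : Fin n, Relation.ReflTransGen (fun a b => head a = some b) j r

/-- A dependency tree is projective if every position's set of descendants is an
interval of consecutive positions. -/
def Projective {n : ℕ} (head : Fin n → Option (Fin n)) : Prop :=
  ∀ i : Fin n, ∃ a b : Fin n,
    ∀ j : Fin n, Relation.ReflTransGen (fun x y => head x = some y) j i ↔ (a ≤ j ∧ j ≤ b)

/-- The six hexatags: `tL`/`tR` are terminal tags (leaf that is a left/right child);
`leftL`/`leftR` are `⇐L`/`⇐R` (internal left child with head-label L/R);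
`rightL`/`rightR` are `⇒L`/`⇒R` (internal right child with head-label L/R). -/
inductive Hexatag : Type where
  | tL | tR | leftL | leftR | rightL | rightR
deriving DecidableEq

/-- A hexatag is terminal if it is `tL` or `tR`. -/
def Hexatag.isTerminal : Hexatag → Prop
  | .tL => True
  | .tR => True
  | _ => False

/-- In-order linearization; the Boolean records whether the current subtree is a
right child of its parent (the root counts as a left child by convention). -/
def BHT.hexatagsAux : BHT → Bool → List Hexatag
  | .leaf, false => [.tL]
  | .leaf, true => [.tR]
  | .nodeL l r, b =>
      l.hexatagsAux false ++ (if b then Hexatag.rightL else Hexatag.leftL) :: r.hexatagsAux true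
  | .nodeR l r, b =>
      l.hexatagsAux false ++ (if b then Hexatag.rightR else Hexatag.leftR) :: r.hexatagsAux true

/-- The hexatag linearization of a BHT. -/
def BHT.hexatags (T : BHT) : List Hexatag := T.hexatagsAux false

/-- The tags emitted for the leaves of a BHT, in left-to-right order. -/
def BHT.leafTagsAux : BHT → Bool → List Hexatag
  | .leaf, false => [.tL]
  | .leaf, true => [.tR]
  | .nodeL l r, _ => l.leafTagsAux false ++ r.leafTagsAux true
  | .nodeR l r, _ => l.leafTagsAux false ++ r.leafTagsAux true

/-- The tags emitted for the leaves of a BHT in left-to-right order (root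
counts as a left child by convention). -/
def BHT.leafTags (T : BHT) : List Hexatag := T.leafTagsAux false

/-- Partial BHTs: binary head trees possibly containing a dummy placeholder. -/
inductive PBHT : Type where
  | dummy : PBHT
  | leaf : PBHT
  | nodeL (l r : PBHT) : PBHT
  | nodeR (l r : PBHT) : PBHT
deriving DecidableEq

/-- Does a partial BHT contain a dummy? -/
def PBHT.hasDummy : PBHT → Bool
  | .dummy => true
  | .leaf => false
  | .nodeL l r => l.hasDummy || r.hasDummy
  | .nodeR l r => l.hasDummy || r.hasDummy

/-- Substitute `u` for the dummy in a partial BHT. -/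
def PBHT.subst : PBHT → PBHT → PBHT
  | .dummy, u => u
  | .leaf, _ => .leaf
  | .nodeL l r, u => .nodeL (l.subst u) (r.subst u)
  | .nodeR l r, u => .nodeR (l.subst u) (r.subst u)

/-- One step of the left-corner decoder on a stack of partial BHTs. -/
def hexStep : List PBHT → Hexatag → Option (List PBHT)
  | st, .tL => some (.leaf :: st)
  | t :: st, .tR => if t.hasDummy then some (t.subst .leaf :: st) else none
  | t :: st, .leftL => some (.nodeL t .dummy :: st)
  | t :: st, .leftR => some (.nodeR t .dummy :: st)
  | t :: u :: st, .rightL =>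
      if u.hasDummy then some (u.subst (.nodeL t .dummy) :: st) else none
  | t :: u :: st, .rightR =>
      if u.hasDummy then some (u.subst (.nodeR t .dummy) :: st) else none
  | _, _ => none

/-- The left-corner decoder: run the stack operations; succeed iff every
operation is defined and the final stack is a single dummy-free tree. -/
def tags2bht (τ : List Hexatag) : Option PBHT :=
  match τ.foldlM hexStep ([] : List PBHT) with
  | some [t] => if t.hasDummy then none else some t
  | _ => none

/-- Embedding of BHTs into partial BHTs. -/
def BHT.toPBHT : BHT → PBHT
  | .leaf => .leaf
  | .nodeL l r => .nodeL l.toPBHT r.toPBHT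
  | .nodeR l r => .nodeR l.toPBHT r.toPBHT

/-- Stack-count increment of a hexatag. -/
def Hexatag.delta : Hexatag → ℤ
  | .tL => 1
  | .tR => 0
  | .leftL => 0
  | .leftR => 0
  | .rightL => -1
  | .rightR => -1

/-- Running stack count `sₖ` after the first `k` tags of `τ`. -/
def stackCount (τ : List Hexatag) (k : ℕ) : ℤ :=
  ((τ.take k).map Hexatag.delta).sum

/-- Validity of a hexatag list (0-indexed: Lean index `k` is 1-indexed position `k+1`). -/
def ValidTags (τ : List Hexatag) : Prop :=
  (τ.length % 2 = 1 ∧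
    ∀ k : ℕ, ∀ t : Hexatag, τ[k]? = some t →
      (k % 2 = 0 → t.isTerminal) ∧ (k % 2 = 1 → ¬ t.isTerminal)) ∧
  τ[0]? = some Hexatag.tL ∧
  (∀ k : ℕ, ∀ t : Hexatag, τ[k]? = some t →
    (t = Hexatag.rightL ∨ t = Hexatag.rightR) → 2 ≤ stackCount τ k) ∧
  stackCount τ τ.length = 1

/-!
Let `r` be the head of a span of positions on which a projective dependency tree restricts to a
tree. If `r` is not the last position of the span, then the last position lies below some
dependent `c` of `r`. By projectivity the descendants of `c` form a final segment of the span, and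
the arc from `r` to `c` is the only one joining this segment to the rest. Hence an `L`-node over
BHTs for the two segments, with heads `r` and `c`, encodes the span. If `r` is last but not first,
the first position gives an `R`-node in the same way.
-/

section TreeOn

open Relation

variable {α : Type*} {R : α → α → Prop} {S : Set α} {r c : α}

/-- The descendants of `c`, where `R a b` means that `b` is the head of `a`. -/
def descendants (R : α → α → Prop) (c : α) : Set α :=
  {j | ReflTransGen R j c}

/-- `R` restricts to a tree on `S` with root `r`, where `R a b` means that `b` is the head of `a`.
The root may still have a head outside `S`. -/
structure IsTreeOn (R : α → α → Prop) (S : Set α) (r : α) : Prop where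
  root_mem : r ∈ S
  subset_descendants : S ⊆ descendants R r
  mem_of_rel : ∀ ⦃j k⦄, j ∈ S → j ≠ r → R j k → k ∈ S

/-- The arcs, written as pairs of a head and its dependent, whose dependent is a position of `S`
other than `r`. When `R` is a tree on `S` with root `r`, these are the arcs of that tree. -/
def arcsWithin (R : α → α → Prop) (S : Set α) (r : α) : Set (α × α) :=
  {p | p.2 ∈ S ∧ p.2 ≠ r ∧ R p.2 p.1}

theorem self_mem_descendants (R : α → α → Prop) (c : α) : c ∈ descendants R c :=
  ReflTransGen.refl

theorem mem_descendants_of_rel {j k : α} (hjk : R j k) (hk : k ∈ descendants R c) :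
    j ∈ descendants R c :=
  ReflTransGen.head hjk hk

theorem mem_descendants_of_rel_of_ne (hR : Relator.RightUnique R) {j k : α}
    (hj : j ∈ descendants R c) (hjc : j ≠ c) (hjk : R j k) : k ∈ descendants R c := by
  obtain rfl | ⟨k', hjk', hk'⟩ := ReflTransGen.cases_head hj
  · exact absurd rfl hjc
  · rwa [hR hjk hjk']

theorem notMem_descendants_of_rel (hR : ∀ x, ¬ TransGen R x x) (hcr : R c r) :
    r ∉ descendants R c :=
  fun hrc => hR c (TransGen.head' hcr hrc)

theorem not_transGen_self_of_mem_descendants (hR : Relator.RightUnique R) (hr : ∀ y, ¬ R r y)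
    {x : α} (hx : x ∈ descendants R r) : ¬ TransGen R x x := by
  induction hx using ReflTransGen.head_induction_on with
  | refl =>
    intro hcycle
    obtain ⟨y, hry, -⟩ := TransGen.head'_iff.1 hcycle
    exact hr y hry
  | head hxy _ ih =>
    intro hcycle
    obtain ⟨y', hxy', hyx⟩ := TransGen.head'_iff.1 hcycle
    obtain rfl := hR hxy hxy'
    exact ih (TransGen.tail' hyx hxy)

namespace IsTreeOn

theorem exists_rel_root (hS : IsTreeOn R S r) {e : α} (he : e ∈ S) (her : e ≠ r) :
    ∃ c ∈ S, R c r ∧ e ∈ descendants R c := by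
  have hreach : ReflTransGen R e r := hS.subset_descendants he
  induction hreach using ReflTransGen.head_induction_on with
  | refl => exact absurd rfl her
  | @head x y hxy _ ih =>
    by_cases hyr : y = r
    · exact ⟨x, he, hyr ▸ hxy, self_mem_descendants R x⟩
    · obtain ⟨c, hcS, hcr, hyc⟩ := ih (hS.mem_of_rel he her hxy) hyr
      exact ⟨c, hcS, hcr, mem_descendants_of_rel hxy hyc⟩

theorem sdiff_descendants (hS : IsTreeOn R S r) (hrc : r ∉ descendants R c) :
    IsTreeOn R (S \ descendants R c) r where
  root_mem := ⟨hS.root_mem, hrc⟩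
  subset_descendants := Set.sdiff_subset.trans hS.subset_descendants
  mem_of_rel _ _ hj hjr hjk :=
    ⟨hS.mem_of_rel hj.1 hjr hjk, fun hk => hj.2 (mem_descendants_of_rel hjk hk)⟩

theorem inter_descendants (hR : Relator.RightUnique R) (hS : IsTreeOn R S r) (hc : c ∈ S)
    (hrc : r ∉ descendants R c) : IsTreeOn R (S ∩ descendants R c) c where
  root_mem := ⟨hc, self_mem_descendants R c⟩
  subset_descendants := Set.inter_subset_right
  mem_of_rel _ _ hj hjc hjk :=
    ⟨hS.mem_of_rel hj.1 (ne_of_mem_of_not_mem hj.2 hrc) hjk,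
      mem_descendants_of_rel_of_ne hR hj.2 hjc hjk⟩

end IsTreeOn

theorem arcsWithin_eq_insert (hR : Relator.RightUnique R) (hc : c ∈ S) (hcr : R c r)
    (hrc : r ∉ descendants R c) :
    arcsWithin R S r = insert (r, c)
      (arcsWithin R (S \ descendants R c) r ∪ arcsWithin R (S ∩ descendants R c) c) := by
  ext ⟨a, b⟩
  constructor
  · rintro ⟨hb, hbr, hba⟩
    by_cases hbc : b = c
    · subst hbc
      exact Or.inl (Prod.ext (hR hba hcr) rfl)
    · by_cases hbD : b ∈ descendants R c
      · exact Or.inr (Or.inr ⟨⟨hb, hbD⟩, hbc, hba⟩)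
      · exact Or.inr (Or.inl ⟨⟨hb, hbD⟩, hbr, hba⟩)
  · rintro (hab | ⟨hb, hbr, hba⟩ | ⟨hb, -, hba⟩)
    · obtain ⟨rfl, rfl⟩ := Prod.mk.inj hab
      exact ⟨hc, ne_of_mem_of_not_mem (self_mem_descendants R b) hrc, hcr⟩
    · exact ⟨hb.1, hbr, hba⟩
    · exact ⟨hb.1, ne_of_mem_of_not_mem hb.2 hrc, hba⟩

end TreeOn

section Span

variable {n : ℕ} {R : Fin n → Fin n → Prop} {i s k : ℕ} {r c : Fin n}

/-- The span of positions `i, …, k - 1`. The bounds are natural numbers so that `k = n` is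
allowed. -/
def span (n i k : ℕ) : Set (Fin n) :=
  {j | i ≤ j ∧ j < k}

theorem span_zero_self (n : ℕ) : span n 0 n = Set.univ :=
  Set.eq_univ_of_forall fun j => ⟨Nat.zero_le j, j.isLt⟩

theorem exists_span_inter_sdiff (hik : i ≤ k) {D : Set (Fin n)}
    (hD : ∀ x y, x ∈ D → x ∈ span n i k → y ∈ span n i k → x ≤ y → y ∈ D) :
    ∃ s, span n i k ∩ D = span n s k ∧ span n i k \ D = span n i s := by
  classical
  have hex : ∃ s, i ≤ s ∧ s ≤ k ∧ span n s k ⊆ D :=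
    ⟨k, hik, le_rfl, fun _ hj => absurd hj.1 hj.2.not_ge⟩
  obtain ⟨his, hsk, hsD⟩ := Nat.find_spec hex
  have hmin : ∀ j ∈ span n i k, j ∈ D → Nat.find hex ≤ j := fun j hj hjD =>
    Nat.find_min' hex ⟨hj.1, hj.2.le, fun y hy => hD j y hjD hj ⟨hj.1.trans hy.1, hy.2⟩ hy.1⟩
  refine ⟨Nat.find hex, Set.ext fun j => ?_, Set.ext fun j => ?_⟩
  · exact ⟨fun hj => ⟨hmin j hj.1 hj.2, hj.1.2⟩,
      fun hj => ⟨⟨his.trans hj.1, hj.2⟩, hsD hj⟩⟩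
  · exact ⟨fun hj => ⟨hj.1.1, lt_of_not_ge fun hsj => hj.2 (hsD ⟨hsj, hj.1.2⟩)⟩,
      fun hj => ⟨⟨hj.1, hj.2.trans_le hsk⟩,
        fun hjD => (hmin j ⟨hj.1, hj.2.trans_le hsk⟩ hjD).not_gt hj.2⟩⟩

namespace BHT

/-- `T`, placed over the positions `i, …, k - 1`, has head `r` and exactly the arcs of the tree with
root `r` to which `R` restricts there. -/
structure Encodes (T : BHT) (R : Fin n → Fin n → Prop) (i k : ℕ) (r : Fin n) : Prop where
  add_numLeaves : i + T.numLeaves = k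
  headAt_eq : T.headAt i = r
  arcsAt_eq : T.arcsAt i = Prod.map Fin.val Fin.val '' arcsWithin R (span n i k) r

theorem encodes_leaf (R : Fin n → Fin n → Prop) (r : Fin n) : leaf.Encodes R r (r + 1) r where
  add_numLeaves := rfl
  headAt_eq := rfl
  arcsAt_eq := by
    have harcs : arcsWithin R (span n r (r + 1)) r = ∅ :=
      Set.eq_empty_of_forall_notMem fun _ ⟨hb, hbr, _⟩ =>
        hbr (Fin.ext (Nat.le_antisymm (Nat.lt_succ_iff.1 hb.2) hb.1))
    rw [harcs, Set.image_empty, arcsAt]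

theorem Encodes.nodeL {T U : BHT} (hT : T.Encodes R i s r) (hU : U.Encodes R s k c)
    (harcs : arcsWithin R (span n i k) r =
      insert (r, c) (arcsWithin R (span n i s) r ∪ arcsWithin R (span n s k) c)) :
    (nodeL T U).Encodes R i k r where
  add_numLeaves := by rw [numLeaves, ← add_assoc, hT.add_numLeaves, hU.add_numLeaves]
  headAt_eq := hT.headAt_eq
  arcsAt_eq := by
    rw [harcs, Set.image_insert_eq, Set.image_union, ← hT.arcsAt_eq, ← hU.arcsAt_eq, arcsAt,
      hT.add_numLeaves, hT.headAt_eq, hU.headAt_eq, Prod.map_apply]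

theorem Encodes.nodeR {T U : BHT} (hT : T.Encodes R i s c) (hU : U.Encodes R s k r)
    (harcs : arcsWithin R (span n i k) r =
      insert (r, c) (arcsWithin R (span n s k) r ∪ arcsWithin R (span n i s) c)) :
    (nodeR T U).Encodes R i k r where
  add_numLeaves := by rw [numLeaves, ← add_assoc, hT.add_numLeaves, hU.add_numLeaves]
  headAt_eq := by rw [headAt, hT.add_numLeaves, hU.headAt_eq]
  arcsAt_eq := by
    rw [harcs, Set.image_insert_eq, Set.image_union, Set.union_comm, ← hT.arcsAt_eq,
      ← hU.arcsAt_eq, arcsAt, hT.add_numLeaves, hT.headAt_eq, hU.headAt_eq, Prod.map_apply]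

end BHT

namespace IsTreeOn

theorem exists_split_of_lt_last (hR : Relator.RightUnique R)
    (hacyclic : ∀ x, ¬ Relation.TransGen R x x) (hconv : ∀ c, (descendants R c).OrdConnected)
    (hk : k ≤ n) (hS : IsTreeOn R (span n i k) r) (hr : r + 1 < k) :
    ∃ s c, i < s ∧ s < k ∧ IsTreeOn R (span n i s) r ∧ IsTreeOn R (span n s k) c ∧
      arcsWithin R (span n i k) r =
        insert (r, c) (arcsWithin R (span n i s) r ∪ arcsWithin R (span n s k) c) := by
  let e : Fin n := ⟨k - 1, by omega⟩
  obtain ⟨hir, hrk⟩ : i ≤ r ∧ r < k := hS.root_mem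
  have he : e ∈ span n i k := ⟨Nat.le_sub_one_of_lt (hir.trans_lt hrk), Nat.sub_one_lt_of_lt hrk⟩
  obtain ⟨c, hc, hcr, hec⟩ := hS.exists_rel_root he (Fin.ne_of_val_ne (Nat.lt_sub_of_add_lt hr).ne')
  have hrc := notMem_descendants_of_rel hacyclic hcr
  obtain ⟨s, hinter, hsdiff⟩ := exists_span_inter_sdiff (hir.trans hrk.le) (D := descendants R c)
    fun x y hx _ hy hxy => (hconv c).out hx hec ⟨hxy, Nat.le_sub_one_of_lt hy.2⟩
  have hleft := hsdiff ▸ hS.sdiff_descendants hrc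
  have hright := hinter ▸ hS.inter_descendants hR hc hrc
  have harcs := arcsWithin_eq_insert hR hc hcr hrc
  rw [hinter, hsdiff] at harcs
  exact ⟨s, c, hir.trans_lt hleft.root_mem.2, hright.root_mem.1.trans_lt hright.root_mem.2,
    hleft, hright, harcs⟩

theorem exists_split_of_first_lt (hR : Relator.RightUnique R)
    (hacyclic : ∀ x, ¬ Relation.TransGen R x x) (hconv : ∀ c, (descendants R c).OrdConnected)
    (hS : IsTreeOn R (span n i k) r) (hr : i < r) :
    ∃ s c, i < s ∧ s < k ∧ IsTreeOn R (span n i s) c ∧ IsTreeOn R (span n s k) r ∧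
      arcsWithin R (span n i k) r =
        insert (r, c) (arcsWithin R (span n s k) r ∪ arcsWithin R (span n i s) c) := by
  let e : Fin n := ⟨i, hr.trans r.isLt⟩
  have hrk : r < k := hS.root_mem.2
  have he : e ∈ span n i k := ⟨le_rfl, hr.trans hrk⟩
  obtain ⟨c, hc, hcr, hec⟩ := hS.exists_rel_root he (Fin.ne_of_val_ne hr.ne)
  have hrc := notMem_descendants_of_rel hacyclic hcr
  -- The descendants of `c` now form an initial segment, so their complement is the final one.
  obtain ⟨s, hsdiff, hinter⟩ := exists_span_inter_sdiff (hr.trans hrk).le (D := (descendants R c)ᶜ)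
    fun x y hx hxS _ hxy hy => hx ((hconv c).out hec hy ⟨hxS.1, hxy⟩)
  rw [← Set.sdiff_eq] at hsdiff
  rw [Set.sdiff_compl] at hinter
  have hleft := hinter ▸ hS.inter_descendants hR hc hrc
  have hright := hsdiff ▸ hS.sdiff_descendants hrc
  have harcs := arcsWithin_eq_insert hR hc hcr hrc
  rw [hinter, hsdiff] at harcs
  exact ⟨s, c, hleft.root_mem.1.trans_lt hleft.root_mem.2, hright.root_mem.1.trans_lt hrk,
    hleft, hright, harcs⟩

theorem exists_encodes (hR : Relator.RightUnique R) (hacyclic : ∀ x, ¬ Relation.TransGen R x x)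
    (hconv : ∀ c, (descendants R c).OrdConnected) {i k : ℕ} {r : Fin n} (hk : k ≤ n)
    (hS : IsTreeOn R (span n i k) r) : ∃ T : BHT, T.Encodes R i k r := by
  obtain ⟨hir, hrk⟩ : i ≤ r ∧ r < k := hS.root_mem
  rcases (Nat.succ_le_of_lt hrk).lt_or_eq with hlast | rfl
  · obtain ⟨s, c, _his, hsk, hleft, hright, harcs⟩ :=
      hS.exists_split_of_lt_last hR hacyclic hconv hk hlast
    obtain ⟨T, hT⟩ := hleft.exists_encodes hR hacyclic hconv (hsk.le.trans hk)
    obtain ⟨U, hU⟩ := hright.exists_encodes hR hacyclic hconv hk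
    exact ⟨.nodeL T U, hT.nodeL hU harcs⟩
  rcases hir.lt_or_eq with hfirst | rfl
  · obtain ⟨s, c, _his, hsk, hleft, hright, harcs⟩ :=
      hS.exists_split_of_first_lt hR hacyclic hconv hfirst
    obtain ⟨T, hT⟩ := hleft.exists_encodes hR hacyclic hconv (hsk.le.trans hk)
    obtain ⟨U, hU⟩ := hright.exists_encodes hR hacyclic hconv hk
    exact ⟨.nodeR T U, hT.nodeR hU harcs⟩
  · exact ⟨.leaf, BHT.encodes_leaf R r⟩
termination_by k - i

end IsTreeOn

end Span

section DepTree

variable {n : ℕ} {head : Fin n → Option (Fin n)}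

theorem bht2dep_eq_of_mem_arcs_iff {T : BHT}
    (hT : ∀ i j : Fin n, ((i : ℕ), (j : ℕ)) ∈ T.arcs ↔ head j = some i) :
    bht2dep n T = head := by
  funext j
  unfold bht2dep
  dsimp only
  split_ifs with h
  · exact ((hT _ j).1 h.choose_spec.1).symm
  · refine (Option.eq_none_iff_forall_ne_some.2 fun i hi => ?_).symm
    refine h ⟨i, (hT i j).2 hi, fun i' hi' => ?_⟩
    exact Option.some_injective _ (((hT i' j).1 hi').symm.trans hi)

theorem rightUnique_eq_some {α β : Type*} (f : α → Option β) :
    Relator.RightUnique fun a b => f a = some b :=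
  fun _ _ _ hb hc => Option.some_injective _ (hb.symm.trans hc)

theorem Projective.ordConnected_descendants (hp : Projective head) (c : Fin n) :
    (descendants (fun a b => head a = some b) c).OrdConnected := by
  obtain ⟨a, b, hab⟩ := hp c
  have hIcc : descendants (fun a b => head a = some b) c = Set.Icc a b := Set.ext hab
  exact hIcc ▸ Set.ordConnected_Icc

theorem IsDepTree.exists_bht2dep_eq (ht : IsDepTree head) (hp : Projective head) :
    ∃ T : BHT, T.numLeaves = n ∧ bht2dep n T = head := by
  obtain ⟨r, hr, -, hreach⟩ := ht
  have hR := rightUnique_eq_some head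
  have hroot : ∀ y, head r ≠ some y := by simp [hr]
  have htree : IsTreeOn (fun a b => head a = some b) (span n 0 n) r := by
    rw [span_zero_self]
    exact ⟨trivial, fun j _ => hreach j, fun _ _ _ _ _ => trivial⟩
  obtain ⟨T, hleaves, -, harcs⟩ := htree.exists_encodes hR
    (fun x => not_transGen_self_of_mem_descendants hR hroot (hreach x))
    hp.ordConnected_descendants le_rfl
  refine ⟨T, by rwa [zero_add] at hleaves, bht2dep_eq_of_mem_arcs_iff fun i j => ?_⟩
  have hne : head j = some i → j ≠ r := fun hji hjr => hroot i (hjr ▸ hji)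
  rw [BHT.arcs, harcs, span_zero_self, ← Prod.map_apply Fin.val Fin.val,
    (Fin.val_injective.prodMap Fin.val_injective).mem_set_image]
  exact ⟨fun h => h.2.2, fun h => ⟨trivial, hne h, h⟩⟩

end DepTree

theorem bht2dep_surjective_onto_projective (n : ℕ) (hn : 1 ≤ n) :
    (∀ t : Fin n → Option (Fin n), IsDepTree t → Projective t →
      ∃ T : BHT, T.numLeaves = n ∧ bht2dep n T = t) ∧
    ∃ Φ : {t : Fin n → Option (Fin n) // IsDepTree t ∧ Projective t} → BHT,
      Function.Injective Φ ∧
      ∀ t : {t : Fin n → Option (Fin n) // IsDepTree t ∧ Projective t},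
        (Φ t).numLeaves = n ∧ bht2dep n (Φ t) = t.val := by
  refine ⟨fun _ ht hp => ht.exists_bht2dep_eq hp, ?_⟩
  choose Φ hΦ using fun t : {t : Fin n → Option (Fin n) // IsDepTree t ∧ Projective t} =>
    t.2.1.exists_bht2dep_eq t.2.2
  refine ⟨Φ, fun s t hst => Subtype.ext ?_, hΦ⟩
  rw [← (hΦ s).2, ← (hΦ t).2, hst]
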